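/- arXiv:math/0210137 — 2 statements merged into one kernel-verified Lean document; each statement's English description precedes it below -/
import Mathlib

section
/- For α ≥ 1/2 and x, y > 0, the measure dν^α_{x,y}(z) = m_α(x,y,z) z^{2α+1} dz on [|x−y|, x+y], where m_α(x,y,z) = (2^{1−2α}Γ(α+1)/(√π Γ(α+1/2))) · [(z² − (x−y)²)((x+y)² − z²)]^{α−1/2}/(xyz)^{2α}, is a probability measure and satisfies the Bessel product formula j_α(xt) j_α(yt) = ∫_0^∞ j_α(zt) dν^α_{x,y}(z) for all real t. -/
open MeasureTheory

/-- The normalized Bessel function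
`j_α(x) = Γ(α+1) Σ_{n≥0} (−1)^n (x/2)^{2n} / (n! Γ(n+α+1))`. -/
noncomputable def besselJR (α : ℝ) (x : ℝ) : ℝ :=
  Real.Gamma (α + 1) *
    ∑' n : ℕ, ((-1 : ℝ)) ^ n * (x / 2) ^ (2 * n) /
      ((n.factorial : ℝ) * Real.Gamma ((n : ℝ) + α + 1))

/-- Gegenbauer's kernel
`m_α(x,y,z) = (2^{1−2α}Γ(α+1)/(√π Γ(α+1/2))) [(z²−(x−y)²)((x+y)²−z²)]^{α−1/2}/(xyz)^{2α}`
for `z ∈ [|x−y|, x+y]`, and `0` otherwise. -/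
noncomputable def besselProdKernel (α x y : ℝ) (z : ℝ) : ℝ :=
  Set.indicator (Set.Icc |x - y| (x + y))
    (fun z => 2 ^ (1 - 2 * α) * Real.Gamma (α + 1) /
        (Real.sqrt Real.pi * Real.Gamma (α + 1/2)) *
        ((z ^ 2 - (x - y) ^ 2) * ((x + y) ^ 2 - z ^ 2)) ^ (α - 1/2) /
        (x * y * z) ^ (2 * α)) z


lemma bp_pascal (f : ℕ → ℝ) (k : ℕ) :
    ∑ j ∈ Finset.range (k + 2), ((k + 1).choose j : ℝ) * f j
      = ∑ j ∈ Finset.range (k + 1), (k.choose j : ℝ) * f j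
        + ∑ j ∈ Finset.range (k + 1), (k.choose j : ℝ) * f (j + 1) := by
  rw [Finset.sum_range_succ']
  have h : ∑ j ∈ Finset.range (k + 1), (k.choose j : ℝ) * f j
      = ∑ j ∈ Finset.range (k + 1), (k.choose (j+1) : ℝ) * f (j + 1) + f 0 := by
    have h1 := Finset.sum_range_succ' (fun j => (k.choose j : ℝ) * f j) (k + 1)
    have h2 := Finset.sum_range_succ (fun j => (k.choose j : ℝ) * f j) (k + 1)
    simp at h1 h2
    linarith
  rw [h]
  simp only [Nat.choose_succ_succ, Nat.cast_add, add_mul, Finset.sum_add_distrib]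
  simp
  ring

lemma bp_vander (k : ℕ) : ∀ (l : ℕ) (β : ℝ), 0 < β →
    ∑ j ∈ Finset.range (k + 1), (k.choose j : ℝ) * ((l.descFactorial j : ℝ) / Real.Gamma (j + β))
      = Real.Gamma (k + l + β) / (Real.Gamma (k + β) * Real.Gamma (l + β)) := by
  induction k with
  | zero =>
    intro l β hβ
    have := (Real.Gamma_pos_of_pos hβ).ne'
    have := (Real.Gamma_pos_of_pos (show 0 < (l:ℝ) + β by positivity)).ne'
    simp
    field_simp
  | succ k ih =>
    intro l β hβ
    rw [bp_pascal (fun j => (l.descFactorial j : ℝ) / Real.Gamma (j + β)), ih l β hβ]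
    have e1 : Real.Gamma (((k + 1 : ℕ) : ℝ) + β) = (k + β) * Real.Gamma (k + β) := by
      rw [← Real.Gamma_add_one (by positivity)]; push_cast; ring_nf
    have e2 : Real.Gamma (((k + 1 : ℕ) : ℝ) + l + β) = (k + l + β) * Real.Gamma (k + l + β) := by
      rw [← Real.Gamma_add_one (by positivity)]; push_cast; ring_nf
    have g1 := (Real.Gamma_pos_of_pos (show 0 < (l:ℝ) + β by positivity)).ne'
    have g2 := (Real.Gamma_pos_of_pos (show 0 < (k:ℝ) + β by positivity)).ne'
    have g3 : (k:ℝ) + β ≠ 0 := by positivity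
    cases l with
    | zero =>
      simp only [Nat.zero_descFactorial_succ]
      rw [e1, e2]
      simp at *
      field_simp
    | succ l =>
      have h := ih l (β + 1) (by positivity)
      have e3 : ∑ j ∈ Finset.range (k + 1), (k.choose j : ℝ) *
          (((l+1).descFactorial (j+1) : ℝ) / Real.Gamma ((j + 1 : ℕ) + β))
          = (l + 1) * ∑ j ∈ Finset.range (k + 1), (k.choose j : ℝ) *
          ((l.descFactorial j : ℝ) / Real.Gamma (j + (β + 1))) := by
        rw [Finset.mul_sum]
        refine Finset.sum_congr rfl fun j _ => ?_
        rw [Nat.succ_descFactorial_succ]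
        push_cast
        rw [show (j:ℝ) + 1 + β = j + (β + 1) by ring]
        ring
      rw [e3, h, e1, e2]
      rw [show (k:ℝ) + (β + 1) = ((k + 1 : ℕ) : ℝ) + β by push_cast; ring, e1,
        show (l:ℝ) + (β + 1) = ((l + 1 : ℕ) : ℝ) + β by push_cast; ring,
        show (k:ℝ) + l + (β + 1) = (k:ℝ) + ((l + 1 : ℕ) : ℝ) + β by push_cast; ring]
      field_simp
      push_cast
      ring

/-- Factorial form of the Vandermonde identity. -/
lemma bp_vander' (k l : ℕ) (β : ℝ) (hβ : 0 < β) :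
    ∑ j ∈ Finset.range (min k l + 1),
      1 / ((j.factorial : ℝ) * (k - j).factorial * (l - j).factorial * Real.Gamma (j + β))
      = Real.Gamma (k + l + β) /
        ((k.factorial : ℝ) * l.factorial * Real.Gamma (k + β) * Real.Gamma (l + β)) := by
  have h := bp_vander k l β hβ
  have h2 : ∑ j ∈ Finset.range (k + 1),
      (k.choose j : ℝ) * ((l.descFactorial j : ℝ) / Real.Gamma (j + β))
      = (k.factorial * l.factorial) * ∑ j ∈ Finset.range (min k l + 1),
      1 / ((j.factorial : ℝ) * (k - j).factorial * (l - j).factorial * Real.Gamma (j + β)) := by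
    rw [Finset.mul_sum]
    symm
    apply Finset.sum_subset_zero_on_sdiff
    · intro j; simp only [Finset.mem_range]; omega
    · intro j hj
      simp only [Finset.mem_sdiff, Finset.mem_range] at hj
      rw [Nat.descFactorial_of_lt (by omega)]
      simp
    · intro j hj
      simp only [Finset.mem_range] at hj
      have a1 : j ≤ k := by omega
      have a2 : j ≤ l := by omega
      rw [Nat.cast_choose ℝ a1, ← Nat.factorial_mul_descFactorial a2]
      have := (Real.Gamma_pos_of_pos (show 0 < (j:ℝ) + β by positivity)).ne'
      push_cast
      field_simp
  rw [h2] at h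
  have := (Real.Gamma_pos_of_pos (show 0 < (l:ℝ) + β by positivity)).ne'
  have := (Real.Gamma_pos_of_pos (show 0 < (k:ℝ) + β by positivity)).ne'
  field_simp at h ⊢
  linear_combination h

/-- The combinatorial identity behind the product formula. -/
lemma bp_comb (a b β : ℝ) (hβ : 0 < β) (n : ℕ) :
    ∑ j ∈ Finset.range (n / 2 + 1),
      (a * b) ^ j * (a + b) ^ (n - 2 * j) /
        ((j.factorial : ℝ) * (n - 2 * j).factorial * Real.Gamma (j + β))
    = Real.Gamma (n + β) * ∑ kl ∈ Finset.HasAntidiagonal.antidiagonal n,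
      (a ^ kl.1 / ((kl.1.factorial : ℝ) * Real.Gamma (kl.1 + β))) *
      (b ^ kl.2 / ((kl.2.factorial : ℝ) * Real.Gamma (kl.2 + β))) := by
  have hR : Real.Gamma (n + β) * ∑ kl ∈ Finset.HasAntidiagonal.antidiagonal n,
      (a ^ kl.1 / ((kl.1.factorial : ℝ) * Real.Gamma (kl.1 + β))) *
      (b ^ kl.2 / ((kl.2.factorial : ℝ) * Real.Gamma (kl.2 + β)))
      = ∑ kl ∈ Finset.HasAntidiagonal.antidiagonal n, ∑ j ∈ Finset.range (min kl.1 kl.2 + 1),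
        a ^ kl.1 * b ^ kl.2 * (1 / ((j.factorial : ℝ) * (kl.1 - j).factorial *
          (kl.2 - j).factorial * Real.Gamma (j + β))) := by
    rw [Finset.mul_sum]
    refine Finset.sum_congr rfl fun kl hkl => ?_
    rw [← Finset.mul_sum, bp_vander' _ _ _ hβ]
    rw [Finset.HasAntidiagonal.mem_antidiagonal] at hkl
    rw [← hkl]
    push_cast
    field_simp
  have hL : ∀ j ∈ Finset.range (n / 2 + 1),
      (a * b) ^ j * (a + b) ^ (n - 2 * j) /
        ((j.factorial : ℝ) * (n - 2 * j).factorial * Real.Gamma (j + β))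
      = ∑ pq ∈ Finset.HasAntidiagonal.antidiagonal (n - 2 * j),
        a ^ (pq.1 + j) * b ^ (pq.2 + j) * (1 / ((j.factorial : ℝ) * pq.1.factorial *
          pq.2.factorial * Real.Gamma (j + β))) := by
    intro j _
    rw [(Commute.all a b).add_pow', Finset.mul_sum, Finset.sum_div]
    refine Finset.sum_congr rfl fun pq hpq => ?_
    rw [Finset.HasAntidiagonal.mem_antidiagonal] at hpq
    rw [← hpq, nsmul_eq_mul, Nat.cast_add_choose]
    have := (Real.Gamma_pos_of_pos (show 0 < (j:ℝ) + β by positivity)).ne'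
    field_simp
    ring
  rw [hR, Finset.sum_congr rfl hL, Finset.sum_sigma', Finset.sum_sigma']
  refine Finset.sum_nbij' (fun s => ⟨(s.2.1 + s.1, s.2.2 + s.1), s.1⟩)
    (fun s => ⟨s.2, (s.1.1 - s.2, s.1.2 - s.2)⟩) ?_ ?_ ?_ ?_ ?_
  · rintro ⟨j, p, q⟩ h
    simp only [Finset.mem_sigma, Finset.mem_range, Finset.HasAntidiagonal.mem_antidiagonal] at h ⊢
    omega
  · rintro ⟨⟨k, l⟩, j⟩ h
    simp only [Finset.mem_sigma, Finset.mem_range, Finset.HasAntidiagonal.mem_antidiagonal] at h ⊢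
    omega
  · rintro ⟨j, p, q⟩ h
    simp
  · rintro ⟨⟨k, l⟩, j⟩ h
    simp only [Finset.mem_sigma, Finset.mem_range, Finset.HasAntidiagonal.mem_antidiagonal] at h
    simp only
    rw [Nat.sub_add_cancel (by omega), Nat.sub_add_cancel (by omega)]
  · rintro ⟨j, p, q⟩ h
    simp

/-- The weight. -/
noncomputable def bpW (α s : ℝ) : ℝ := (1 - s ^ 2) ^ (α - 1/2)

lemma bpW_cont (α : ℝ) (hα : 1/2 ≤ α) : Continuous (bpW α) := by
  unfold bpW
  exact Continuous.rpow_const (by fun_prop) (fun s => Or.inr (by linarith))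

/-- moments of the weight -/
noncomputable def bpI (α : ℝ) (i : ℕ) : ℝ := ∫ s in (-1:ℝ)..1, s ^ i * bpW α s

lemma bpI_deriv (α : ℝ) (hα : 1/2 ≤ α) (s : ℝ) :
    HasDerivAt (fun s : ℝ => (1 - s ^ 2) ^ (α + 1/2)) (-(2 * α + 1) * (s * bpW α s)) s := by
  have h1 : HasDerivAt (fun s : ℝ => 1 - s ^ 2) (-(2 * s)) s := by
    simpa using (hasDerivAt_pow 2 s).const_sub 1
  have h2 := h1.rpow_const (p := α + 1/2) (Or.inr (by linarith))
  convert h2 using 1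
  unfold bpW
  rw [show α + 1/2 - 1 = α - 1/2 by ring]
  ring

lemma bpI_one (α : ℝ) (hα : 1/2 ≤ α) : bpI α 1 = 0 := by
  have hc := bpW_cont α hα
  have h := intervalIntegral.integral_eq_sub_of_hasDerivAt (a := -1) (b := 1)
    (f := fun s : ℝ => (1 - s ^ 2) ^ (α + 1/2)) (f' := fun s => -(2 * α + 1) * (s * bpW α s))
    (fun s _ => bpI_deriv α hα s)
    (Continuous.intervalIntegrable (by fun_prop) _ _)
  rw [intervalIntegral.integral_const_mul] at h
  simp at h
  unfold bpI
  simp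
  rcases h with h | h
  · linarith
  · exact h

lemma bpI_succ (α : ℝ) (hα : 1/2 ≤ α) (i : ℕ) :
    (i + 2 * α + 2) * bpI α (i + 2) = (i + 1) * bpI α i := by
  have hc := bpW_cont α hα
  have h := intervalIntegral.integral_eq_sub_of_hasDerivAt (a := -1) (b := 1)
    (f := fun s : ℝ => s ^ (i + 1) * (1 - s ^ 2) ^ (α + 1/2))
    (f' := fun s => (i + 1) * (s ^ i * bpW α s) - (i + 2 * α + 2) * (s ^ (i + 2) * bpW α s))
    (by
      intro s hs
      have hs' : s ∈ Set.Icc (-1:ℝ) 1 := by simpa using hs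
      have h1 := (hasDerivAt_pow (i + 1) s).mul (bpI_deriv α hα s)
      refine HasDerivAt.congr_deriv h1 ?_
      have h3 : (1 - s ^ 2) ^ (α + 1/2) = (1 - s ^ 2) * bpW α s := by
        unfold bpW
        have h0 : 0 ≤ 1 - s ^ 2 := by nlinarith [hs'.1, hs'.2]
        rcases h0.eq_or_lt with h0 | h0
        · rw [← h0, Real.zero_rpow (by linarith)]; simp
        · rw [show α + 1/2 = 1 + (α - 1/2) by ring, Real.rpow_add h0, Real.rpow_one]
      rw [h3]
      push_cast
      ring)
    (Continuous.intervalIntegrable (by fun_prop) _ _)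
  rw [intervalIntegral.integral_sub (Continuous.intervalIntegrable (by fun_prop) _ _)
    (Continuous.intervalIntegrable (by fun_prop) _ _),
    intervalIntegral.integral_const_mul, intervalIntegral.integral_const_mul] at h
  have hz : (0:ℝ) ^ (α + 1/2) = 0 := Real.zero_rpow (by linarith)
  simp only [one_pow, even_two, Even.neg_pow, sub_self, hz, mul_zero] at h
  unfold bpI
  linarith

lemma bpI_odd (α : ℝ) (hα : 1/2 ≤ α) (j : ℕ) : bpI α (2 * j + 1) = 0 := by
  induction j with
  | zero => simpa using bpI_one α hα
  | succ j ih =>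
    have h := bpI_succ α hα (2 * j + 1)
    rw [ih, mul_zero] at h
    have : ((2 * j + 1 : ℕ) : ℝ) + 2 * α + 2 ≠ 0 := by positivity
    exact (mul_eq_zero.mp h).resolve_left this

lemma bpI_zero (α : ℝ) (hα : 1/2 ≤ α) :
    bpI α 0 = Real.sqrt Real.pi * Real.Gamma (α + 1/2) / Real.Gamma (α + 1) := by
  have hb : ProbabilityTheory.beta (α + 1/2) (α + 1/2)
      = ∫ u in (0:ℝ)..1, (u * (1 - u)) ^ (α - 1/2) := by
    rw [ProbabilityTheory.beta_eq_betaIntegralReal _ _ (by linarith) (by linarith)]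
    unfold Complex.betaIntegral
    have : ∫ u in (0:ℝ)..1, (u:ℂ) ^ (((α + 1/2 : ℝ) : ℂ) - 1) * (1 - (u:ℂ)) ^ (((α + 1/2 : ℝ) : ℂ) - 1)
       = ∫ u in (0:ℝ)..1, (((u * (1 - u)) ^ (α - 1/2) : ℝ) : ℂ) := by
      refine intervalIntegral.integral_congr fun u hu => ?_
      have hu' : u ∈ Set.Icc (0:ℝ) 1 := by simpa using hu
      have h1 : 0 ≤ 1 - u := by linarith [hu'.2]
      rw [Real.mul_rpow hu'.1 h1, Complex.ofReal_mul, Complex.ofReal_cpow hu'.1,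
        Complex.ofReal_cpow h1]
      push_cast
      congr 2 <;> ring
    rw [this, intervalIntegral.integral_ofReal, Complex.ofReal_re]
  have h2 : ∫ u in (0:ℝ)..1, bpW α (2 * u - 1) = 4 ^ (α - 1/2) * ∫ u in (0:ℝ)..1, (u * (1 - u)) ^ (α - 1/2) := by
    rw [← intervalIntegral.integral_const_mul]
    refine intervalIntegral.integral_congr fun u hu => ?_
    have hu' : u ∈ Set.Icc (0:ℝ) 1 := by simpa using hu
    have h1 : 0 ≤ 1 - u := by linarith [hu'.2]
    simp only [bpW]
    rw [← Real.mul_rpow (by norm_num) (mul_nonneg hu'.1 h1)]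
    congr 1; ring
  rw [← hb, intervalIntegral.integral_comp_mul_sub _ (by norm_num)] at h2
  norm_num at h2
  have h3 : bpI α 0 = ∫ s in (-1:ℝ)..1, bpW α s := by simp [bpI]
  have h4 := Real.Gamma_mul_Gamma_add_half (α + 1/2)
  unfold ProbabilityTheory.beta at h2
  rw [show α + 1/2 + 1/2 = α + 1 by ring, show 2 * (α + 1/2) = 2 * α + 1 by ring,
    show 1 - (2 * α + 1) = - (2 * α) by ring, Real.rpow_neg (by norm_num),
    Real.rpow_mul (by norm_num)] at h4
  rw [show α + 1/2 + (α + 1/2) = 2 * α + 1 by ring, Real.rpow_sub (by norm_num),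
    show (4:ℝ) ^ (1/2:ℝ) = 2 by
      rw [← Real.sqrt_eq_rpow, show (4:ℝ) = 2 ^ 2 by norm_num, Real.sqrt_sq (by norm_num)]] at h2
  norm_num at h4
  have g1 := (Real.Gamma_pos_of_pos (show 0 < α + 1 by linarith)).ne'
  have g2 := (Real.Gamma_pos_of_pos (show 0 < 2 * α + 1 by linarith)).ne'
  have g3 := (Real.Gamma_pos_of_pos (show 0 < α + 1/2 by linarith)).ne'
  have g4 := (Real.rpow_pos_of_pos (show (0:ℝ) < 4 by norm_num) α).ne'
  have h5 : bpI α 0 = 4 ^ α * (Real.Gamma (α + 1/2) * Real.Gamma (α + 1/2)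
     / Real.Gamma (2 * α + 1)) := by rw [h3]; linarith
  rw [h5]
  field_simp at h4 ⊢
  linarith

lemma bpI_even (α : ℝ) (hα : 1/2 ≤ α) (j : ℕ) :
    bpI α (2 * j) = Real.sqrt Real.pi * Real.Gamma (α + 1/2) * ((2 * j).factorial : ℝ) /
      (4 ^ j * j.factorial * Real.Gamma (j + (α + 1))) := by
  induction j with
  | zero => simp [bpI_zero α hα]
  | succ j ih =>
    have h := bpI_succ α hα (2 * j)
    rw [ih] at h
    have g1 := (Real.Gamma_pos_of_pos (show 0 < j + (α + 1) by positivity)).ne'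
    have e1 : Real.Gamma (((j + 1 : ℕ) : ℝ) + (α + 1)) = (j + (α + 1)) * Real.Gamma (j + (α + 1)) := by
      rw [← Real.Gamma_add_one (by positivity)]; push_cast; ring_nf
    rw [e1, show 2 * (j + 1) = 2 * j + 1 + 1 by ring, Nat.factorial_succ, Nat.factorial_succ,
      Nat.factorial_succ]
    have h6 : (((2 * j : ℕ) : ℝ) + 2 * α + 2) ≠ 0 := by positivity
    have h7 : (j:ℝ) + (α + 1) ≠ 0 := by positivity
    rw [← mul_right_inj' h6, h]
    push_cast
    field_simp
    ring

lemma bp_poly (α : ℝ) (hα : 1/2 ≤ α) (x y : ℝ) (n : ℕ) :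
    ∫ s in (-1:ℝ)..1, (x ^ 2 + y ^ 2 + 2 * x * y * s) ^ n * bpW α s
    = Real.sqrt Real.pi * Real.Gamma (α + 1/2) * n.factorial * (Real.Gamma (n + (α + 1)) *
      ∑ kl ∈ Finset.HasAntidiagonal.antidiagonal n,
      ((x ^ 2) ^ kl.1 / ((kl.1.factorial : ℝ) * Real.Gamma (kl.1 + (α + 1)))) *
      ((y ^ 2) ^ kl.2 / ((kl.2.factorial : ℝ) * Real.Gamma (kl.2 + (α + 1))))) := by
  have hc := bpW_cont α hα
  rw [← bp_comb (x ^ 2) (y ^ 2) (α + 1) (by linarith) n]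
  have h1 : ∀ s : ℝ, (x ^ 2 + y ^ 2 + 2 * x * y * s) ^ n * bpW α s
      = ∑ i ∈ Finset.range (n + 1), ((2 * x * y) ^ i * (x ^ 2 + y ^ 2) ^ (n - i) * n.choose i) *
        (s ^ i * bpW α s) := by
    intro s
    rw [add_comm, add_pow, Finset.sum_mul]
    refine Finset.sum_congr rfl fun i _ => ?_
    rw [mul_pow (2 * x * y) s]
    ring
  simp_rw [h1]
  rw [intervalIntegral.integral_finsetSum
    (fun i _ => Continuous.intervalIntegrable (by fun_prop) _ _)]
  simp_rw [intervalIntegral.integral_const_mul]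
  rw [Finset.mul_sum]
  symm
  refine Finset.sum_of_injOn (fun j => 2 * j) ?_ ?_ ?_ ?_
  · intro a _ b _ h
    simpa using h
  · intro j hj
    simp only [Finset.coe_range, Set.mem_Iio] at hj ⊢
    omega
  · intro i hi hi2
    rcases Nat.even_or_odd' i with ⟨j, rfl | rfl⟩
    · exfalso
      apply hi2
      refine ⟨j, ?_, rfl⟩
      simp only [Finset.coe_range, Set.mem_Iio, Finset.mem_range] at hi ⊢
      omega
    · have := bpI_odd α hα j
      unfold bpI at this
      rw [this, mul_zero]
  · intro j hj
    simp only [Finset.mem_range] at hj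
    have := bpI_even α hα j
    unfold bpI at this
    rw [this, Nat.cast_choose ℝ (show 2 * j ≤ n by omega), pow_mul (2 * x * y)]
    have g1 := (Real.Gamma_pos_of_pos (show 0 < j + (α + 1) by positivity)).ne'
    rw [show (2 * x * y) ^ 2 = 4 * (x ^ 2 * y ^ 2) by ring, mul_pow 4]
    field_simp

lemma bp_dens (α x y : ℝ) (hx : 0 < x) (hy : 0 < y) (z : ℝ)
    (hz : z ∈ Set.Ioc |x - y| (x + y)) :
    besselProdKernel α x y z * z ^ (2 * α + 1)
    = Real.Gamma (α + 1) / (Real.sqrt Real.pi * Real.Gamma (α + 1/2)) *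
      (bpW α ((z ^ 2 - x ^ 2 - y ^ 2) / (2 * x * y)) * (z / (x * y))) := by
  have hz0 : 0 < z := lt_of_le_of_lt (abs_nonneg _) hz.1
  have hxy : 0 < x * y := mul_pos hx hy
  have a1 : 0 ≤ z ^ 2 - (x - y) ^ 2 := by
    have := sq_le_sq' (by linarith [abs_nonneg (x - y), hz.1]) hz.1.le
    rw [sq_abs] at this
    linarith
  have a2 : 0 ≤ (x + y) ^ 2 - z ^ 2 := by nlinarith [hz.2]
  have e : (z ^ 2 - (x - y) ^ 2) * ((x + y) ^ 2 - z ^ 2)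
      = (2 * (x * y)) ^ 2 * (1 - ((z ^ 2 - x ^ 2 - y ^ 2) / (2 * x * y)) ^ 2) := by
    field_simp
    ring
  have a3 : 0 ≤ 1 - ((z ^ 2 - x ^ 2 - y ^ 2) / (2 * x * y)) ^ 2 := by
    have h := mul_nonneg a1 a2
    rw [e] at h
    exact nonneg_of_mul_nonneg_right h (by positivity)
  unfold besselProdKernel
  rw [Set.indicator_of_mem (Set.Ioc_subset_Icc_self hz), e, Real.mul_rpow (by positivity) a3, bpW,
    Real.mul_rpow hxy.le hz0.le, Real.rpow_add hz0, Real.rpow_one,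
    show ((2 * (x * y)) ^ 2) ^ (α - 1/2) = (2 ^ (1 - 2 * α))⁻¹ * ((x * y) ^ (2 * α) / (x * y)) by
      rw [← Real.rpow_natCast, ← Real.rpow_mul (by positivity), Real.mul_rpow (by norm_num) hxy.le,
        ← Real.rpow_neg (by norm_num), ← Real.rpow_sub_one hxy.ne']
      congr 2 <;> push_cast <;> ring]
  have g1 := (Real.rpow_pos_of_pos (show (0:ℝ) < 2 by norm_num) (1 - 2 * α)).ne'
  have g2 := (Real.rpow_pos_of_pos hxy (2 * α)).ne'
  have g3 := (Real.rpow_pos_of_pos hz0 (2 * α)).ne'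
  generalize (2:ℝ) ^ (1 - 2 * α) = p at *
  generalize (x * y) ^ (2 * α) = q at *
  generalize z ^ (2 * α) = r at *
  generalize (1 - ((z ^ 2 - x ^ 2 - y ^ 2) / (2 * x * y)) ^ 2) ^ (α - 1/2) = w at *
  field_simp

lemma bp_nonneg (α : ℝ) (hα : 1/2 ≤ α) (x y : ℝ) (hx : 0 < x) (hy : 0 < y) (z : ℝ) :
    0 ≤ besselProdKernel α x y z * z ^ (2 * α + 1) := by
  unfold besselProdKernel
  by_cases hz : z ∈ Set.Icc |x - y| (x + y)
  · rw [Set.indicator_of_mem hz]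
    have hz0 : 0 ≤ z := le_trans (abs_nonneg _) hz.1
    have a1 : 0 ≤ z ^ 2 - (x - y) ^ 2 := by
      have := sq_le_sq' (by linarith [abs_nonneg (x - y), hz.1]) hz.1
      rw [sq_abs] at this
      linarith
    have a2 : 0 ≤ (x + y) ^ 2 - z ^ 2 := by nlinarith [hz.2]
    have g1 := (Real.Gamma_pos_of_pos (show 0 < α + 1 by linarith))
    have g3 := (Real.Gamma_pos_of_pos (show 0 < α + 1/2 by linarith))
    have := mul_nonneg a1 a2
    positivity
  · rw [Set.indicator_of_notMem hz, zero_mul]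

lemma bp_moment (α : ℝ) (hα : 1/2 ≤ α) (x y : ℝ) (hx : 0 < x) (hy : 0 < y) (n : ℕ) :
    IntegrableOn (fun z => z ^ (2 * n) * (besselProdKernel α x y z * z ^ (2 * α + 1)))
      (Set.Ioi (0:ℝ)) ∧
    ∫ z in Set.Ioi (0 : ℝ), z ^ (2 * n) * (besselProdKernel α x y z * z ^ (2 * α + 1))
    = Real.Gamma (α + 1) * n.factorial * (Real.Gamma (n + (α + 1)) *
      ∑ kl ∈ Finset.HasAntidiagonal.antidiagonal n,
      ((x ^ 2) ^ kl.1 / ((kl.1.factorial : ℝ) * Real.Gamma (kl.1 + (α + 1)))) *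
      ((y ^ 2) ^ kl.2 / ((kl.2.factorial : ℝ) * Real.Gamma (kl.2 + (α + 1))))) := by
  have hc := bpW_cont α hα
  have hle : |x - y| ≤ x + y := abs_le.2 ⟨by linarith, by linarith⟩
  set K := Real.Gamma (α + 1) / (Real.sqrt Real.pi * Real.Gamma (α + 1/2)) with hK
  set f : ℝ → ℝ := fun z => (z ^ 2 - x ^ 2 - y ^ 2) / (2 * x * y) with hf
  set f' : ℝ → ℝ := fun z => z / (x * y) with hf'
  set g : ℝ → ℝ := fun s => (x ^ 2 + y ^ 2 + 2 * x * y * s) ^ n * bpW α s with hg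
  have cf : Continuous f := by fun_prop
  have cf' : Continuous f' := by fun_prop
  have cg : Continuous g := by fun_prop
  have hae : (fun z => z ^ (2 * n) * (besselProdKernel α x y z * z ^ (2 * α + 1)))
      =ᵐ[volume] (Set.Ioc |x - y| (x + y)).indicator (fun z => K * ((g ∘ f) z * f' z)) := by
    have h0 : ({|x - y|} : Set ℝ)ᶜ ∈ ae (volume : Measure ℝ) :=
      compl_mem_ae_iff.2 (measure_singleton _)
    filter_upwards [h0] with z hz
    by_cases hz2 : z ∈ Set.Ioc |x - y| (x + y)
    · rw [Set.indicator_of_mem hz2, bp_dens α x y hx hy z hz2]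
      simp only [hg, hf, hf', Function.comp, pow_mul]
      rw [show x ^ 2 + y ^ 2 + 2 * x * y * ((z ^ 2 - x ^ 2 - y ^ 2) / (2 * x * y)) = z ^ 2 by
        field_simp; ring]
      ring
    · rw [Set.indicator_of_notMem hz2, besselProdKernel, Set.indicator_of_notMem]
      · simp
      · intro h
        exact hz2 ⟨lt_of_le_of_ne h.1 (fun h' => hz h'.symm), h.2⟩
  have hint : IntegrableOn (fun z => K * ((g ∘ f) z * f' z)) (Set.Ioc |x - y| (x + y)) :=
    (Continuous.integrableOn_Ioc (by fun_prop))
  constructor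
  · apply Integrable.integrableOn
    exact (integrable_congr hae).2 ((integrable_indicator_iff measurableSet_Ioc).2 hint)
  · rw [integral_congr_ae (ae_restrict_of_ae hae), setIntegral_indicator measurableSet_Ioc,
      Set.inter_eq_right.2 (show Set.Ioc |x - y| (x + y) ⊆ Set.Ioi 0 from
        fun z hz => lt_of_le_of_lt (abs_nonneg _) hz.1),
      ← intervalIntegral.integral_of_le hle, intervalIntegral.integral_const_mul,
      intervalIntegral.integral_comp_mul_deriv (f := f) (f' := f') (g := g) ?_ cf'.continuousOn cg]
    · have e1 : f |x - y| = -1 := by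
        simp only [hf, sq_abs]; field_simp; ring
      have e2 : f (x + y) = 1 := by
        simp only [hf]; field_simp; ring
      rw [e1, e2, bp_poly α hα x y n, hK]
      have g3 := (Real.Gamma_pos_of_pos (show 0 < α + 1/2 by linarith)).ne'
      have g4 : Real.sqrt Real.pi ≠ 0 := (Real.sqrt_pos.2 Real.pi_pos).ne'
      field_simp
    · intro z _
      have h := (((hasDerivAt_pow 2 z).sub_const (x ^ 2)).sub_const (y ^ 2)).div_const (2 * x * y)
      refine HasDerivAt.congr_deriv h ?_
      simp only [hf']
      field_simp
      norm_num

lemma bp_summable (α : ℝ) (hα : 1/2 ≤ α) (u : ℝ) :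
    Summable (fun n : ℕ => ‖u ^ n / ((n.factorial : ℝ) * Real.Gamma (n + (α + 1)))‖) := by
  have g1 := (Real.Gamma_pos_of_pos (show 0 < α + 1 by linarith))
  have hG : ∀ n : ℕ, Real.Gamma (α + 1) ≤ Real.Gamma (n + (α + 1)) := by
    intro n
    induction n with
    | zero => simp
    | succ n ih =>
      have e1 : Real.Gamma (((n + 1 : ℕ) : ℝ) + (α + 1))
          = (n + (α + 1)) * Real.Gamma (n + (α + 1)) := by
        rw [← Real.Gamma_add_one (by positivity)]; push_cast; ring_nf
      rw [e1]
      have : (1:ℝ) ≤ n + (α + 1) := by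
        have : (0:ℝ) ≤ n := by positivity
        linarith
      nlinarith
  refine Summable.of_nonneg_of_le (fun _ => norm_nonneg _) (fun n => ?_)
    ((Real.summable_pow_div_factorial |u|).mul_right (Real.Gamma (α + 1))⁻¹)
  have h2 := lt_of_lt_of_le g1 (hG n)
  rw [norm_div, norm_pow, Real.norm_eq_abs, Real.norm_of_nonneg (by positivity), ← div_div,
    div_eq_mul_inv _ (Real.Gamma _)]
  gcongr
  exact hG n

lemma bp_besselJR (α v : ℝ) : besselJR α v = Real.Gamma (α + 1) *
    ∑' n : ℕ, (-(v / 2) ^ 2) ^ n / ((n.factorial : ℝ) * Real.Gamma (n + (α + 1))) := by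
  unfold besselJR
  congr 1
  refine tsum_congr fun n => ?_
  rw [neg_pow ((v / 2) ^ 2), pow_mul, add_assoc]

/-- for `α ≥ 1/2` and `x, y > 0`, `dν^α_{x,y}(z) = m_α(x,y,z) z^{2α+1} dz`
is a probability measure on `[|x−y|, x+y]` and satisfies the Bessel product formula
`j_α(xt) j_α(yt) = ∫_0^∞ j_α(zt) dν^α_{x,y}(z)` for all real `t`. -/
theorem bessel_product_formula (α : ℝ) (hα : 1/2 ≤ α) (x y : ℝ) (hx : 0 < x) (hy : 0 < y) :
    (∀ z : ℝ, 0 ≤ besselProdKernel α x y z * z ^ (2 * α + 1))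
    ∧ (∫ z in Set.Ioi (0 : ℝ), besselProdKernel α x y z * z ^ (2 * α + 1) = 1)
    ∧ (∀ t : ℝ, besselJR α (x * t) * besselJR α (y * t)
        = ∫ z in Set.Ioi (0 : ℝ),
            besselJR α (z * t) * (besselProdKernel α x y z * z ^ (2 * α + 1))) := by
  have g1 := (Real.Gamma_pos_of_pos (show 0 < α + 1 by linarith))
  refine ⟨bp_nonneg α hα x y hx hy, ?_, fun t => ?_⟩
  · have h := (bp_moment α hα x y hx hy 0).2
    simp at h
    rw [h]
    field_simp
  set c : ℕ → ℝ := fun n => Real.Gamma (α + 1) *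
    ((-(t / 2) ^ 2) ^ n / ((n.factorial : ℝ) * Real.Gamma (n + (α + 1)))) with hc
  set ρ : ℝ → ℝ := fun z => besselProdKernel α x y z * z ^ (2 * α + 1) with hρ
  have hprod := tsum_mul_tsum_eq_tsum_sum_antidiagonal_of_summable_norm
    (bp_summable α hα (-(x * t / 2) ^ 2)) (bp_summable α hα (-(y * t / 2) ^ 2))
  have hsum := summable_norm_sum_mul_antidiagonal_of_summable_norm
    (bp_summable α hα (-(x * t / 2) ^ 2)) (bp_summable α hα (-(y * t / 2) ^ 2))
  have hmom : ∀ n : ℕ, c n * ∫ z in Set.Ioi (0 : ℝ), z ^ (2 * n) * ρ z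
      = Real.Gamma (α + 1) ^ 2 * ∑ kl ∈ Finset.HasAntidiagonal.antidiagonal n,
      ((-(x * t / 2) ^ 2) ^ kl.1 / ((kl.1.factorial : ℝ) * Real.Gamma (kl.1 + (α + 1)))) *
      ((-(y * t / 2) ^ 2) ^ kl.2 / ((kl.2.factorial : ℝ) * Real.Gamma (kl.2 + (α + 1)))) := by
    intro n
    rw [(bp_moment α hα x y hx hy n).2]
    have g2 := (Real.Gamma_pos_of_pos (show 0 < n + (α + 1) by positivity)).ne'
    have e : ∀ S : ℝ, c n * (Real.Gamma (α + 1) * n.factorial * (Real.Gamma (n + (α + 1)) * S))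
        = Real.Gamma (α + 1) ^ 2 * ((-(t / 2) ^ 2) ^ n * S) := by
      intro S
      simp only [hc]
      field_simp
    rw [e, Finset.mul_sum]
    congr 1
    refine Finset.sum_congr rfl fun kl hkl => ?_
    rw [Finset.HasAntidiagonal.mem_antidiagonal] at hkl
    rw [← hkl, pow_add, show -(x * t / 2) ^ 2 = -(t / 2) ^ 2 * x ^ 2 by ring,
      show -(y * t / 2) ^ 2 = -(t / 2) ^ 2 * y ^ 2 by ring, mul_pow _ (x ^ 2), mul_pow _ (y ^ 2)]
    ring
  have hInt : ∀ n : ℕ, Integrable (fun z => c n * (z ^ (2 * n) * ρ z))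
      (volume.restrict (Set.Ioi (0:ℝ))) := fun n =>
    Integrable.const_mul (bp_moment α hα x y hx hy n).1 (c n)
  have hS : Summable fun n : ℕ => ∫ z in Set.Ioi (0:ℝ), ‖c n * (z ^ (2 * n) * ρ z)‖ := by
    have h := hsum.mul_left (Real.Gamma (α + 1) ^ 2)
    refine h.congr fun n => ?_
    have e : ∀ z, ‖c n * (z ^ (2 * n) * ρ z)‖ = ‖c n‖ * (z ^ (2 * n) * ρ z) := by
      intro z
      rw [norm_mul, Real.norm_of_nonneg (r := z ^ (2 * n) * ρ z)]
      exact mul_nonneg (by rw [pow_mul]; positivity) (bp_nonneg α hα x y hx hy z)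
    simp_rw [e]
    rw [integral_const_mul]
    have e2 : 0 ≤ ∫ z in Set.Ioi (0 : ℝ), z ^ (2 * n) * ρ z :=
      integral_nonneg fun z => mul_nonneg (by rw [pow_mul]; positivity)
        (bp_nonneg α hα x y hx hy z)
    rw [← Real.norm_of_nonneg e2, ← norm_mul, hmom, norm_mul,
      Real.norm_of_nonneg (r := Real.Gamma (α + 1) ^ 2) (by positivity)]
  have key := integral_tsum_of_summable_integral_norm hInt hS
  have hR : ∀ z, besselJR α (z * t) * ρ z = ∑' n, c n * (z ^ (2 * n) * ρ z) := by
    intro z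
    rw [bp_besselJR, ← tsum_mul_left, ← tsum_mul_right]
    refine tsum_congr fun n => ?_
    simp only [hc]
    rw [show -(z * t / 2) ^ 2 = -(t / 2) ^ 2 * z ^ 2 by ring, mul_pow _ (z ^ 2), pow_mul z]
    ring
  calc _ = Real.Gamma (α + 1) ^ 2 * ((∑' n : ℕ, (-(x * t / 2) ^ 2) ^ n /
          ((n.factorial : ℝ) * Real.Gamma (n + (α + 1)))) *
          ∑' n : ℕ, (-(y * t / 2) ^ 2) ^ n /
          ((n.factorial : ℝ) * Real.Gamma (n + (α + 1)))) := by
        rw [bp_besselJR, bp_besselJR]; ring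
    _ = ∑' n, c n * ∫ z in Set.Ioi (0 : ℝ), z ^ (2 * n) * ρ z := by
        rw [hprod, ← tsum_mul_left]
        exact tsum_congr fun n => (hmom n).symm
    _ = ∑' n, ∫ z in Set.Ioi (0 : ℝ), c n * (z ^ (2 * n) * ρ z) := by
        exact tsum_congr fun n => (integral_const_mul _ _).symm
    _ = _ := by
        rw [key]
        exact integral_congr_ae (ae_of_all _ fun z => (hR z).symm)
end

section
/- For all λ ≥ 0, r ∈ ℝ and t ∈ [−1,1], one has the expansion e^{irt} = Σ_{n=0}^∞ (ir/2)^n ((2λ)_n/((λ)_n n!)) j_{n+λ}(r) C̃_n^λ(t), with locally uniform convergence in (r,t); here C̃_n^λ is the Gegenbauer polynomial normalized by C̃_n^λ(1) = 1, i.e. C̃_n^λ(x) = ₂F₁(−n, n+2λ; λ+1/2; (1−x)/2), and (a)_n is the Pochhammer symbol (with the limiting interpretation when λ = 0). -/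
open Filter

/-- The Pochhammer symbol `(a)_n`. -/
noncomputable def poch (a : ℝ) (n : ℕ) : ℝ := (ascPochhammer ℝ n).eval a

/-- The Gegenbauer polynomial normalized by `C̃_n^λ(1) = 1`, i.e.
`C̃_n^λ(x) = ₂F₁(−n, n+2λ; λ+1/2; (1−x)/2)`. -/
noncomputable def gegenbauerN (lam : ℝ) (n : ℕ) (x : ℝ) : ℝ :=
  ∑ j ∈ Finset.range (n + 1),
    poch (-(n : ℝ)) j * poch ((n : ℝ) + 2 * lam) j /
      (poch (lam + 1/2) j * (j.factorial : ℝ)) * ((1 - x) / 2) ^ j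

/-- The coefficient `(2λ)_n / (λ)_n`, with its limiting interpretation at `λ = 0`
(namely `1` for `n = 0` and `2` for `n ≥ 1`). -/
noncomputable def gegenCoeff (lam : ℝ) (n : ℕ) : ℝ :=
  if lam = 0 then (if n = 0 then 1 else 2) else poch (2 * lam) n / poch lam n


lemma poch_zero' (a : ℝ) : poch a 0 = 1 := by simp [poch]

lemma poch_sr (a : ℝ) (n : ℕ) : poch a (n + 1) = poch a n * (a + n) := by
  simp [poch, ascPochhammer_succ_eval]

lemma poch_sl (a : ℝ) (n : ℕ) : poch a (n + 1) = a * poch (a + 1) n := by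
  simp [poch, ascPochhammer_succ_left, Polynomial.eval_comp]

lemma poch_pos' (a : ℝ) (ha : 0 < a) (n : ℕ) : 0 < poch a n := ascPochhammer_pos n a ha

lemma poch_neg_zero (n j : ℕ) (h : n < j) : poch (-(n : ℝ)) j = 0 := by
  induction j with
  | zero => omega
  | succ j ih =>
    rw [poch_sr]
    rcases Nat.lt_succ_iff_lt_or_eq.mp h with h | h
    · rw [ih h, zero_mul]
    · subst h; simp

noncomputable def gA (lam ν : ℝ) (j : ℕ) : ℝ :=
  poch (-ν) j * poch (ν + 2 * lam) j / (poch (lam + 1/2) j * (j.factorial : ℝ))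

lemma gA_zero (lam ν : ℝ) : gA lam ν 0 = 1 := by simp [gA, poch_zero']

lemma gA_rec (lam : ℝ) (hlam : 0 ≤ lam) (ν : ℝ) (j : ℕ) :
    (ν + 2 * lam) * gA lam (ν + 1) (j + 1) =
      2 * (ν + lam) * (gA lam ν (j + 1) - 2 * gA lam ν j) - ν * gA lam (ν - 1) (j + 1) := by
  rcases j with _ | i
  · simp only [gA, poch_sr, poch_zero']
    have : lam + 1/2 ≠ 0 := by positivity
    have h2 : lam * 2 + 1 ≠ 0 := by positivity
    simp
    field_simp
    ring
  · have e1 : poch (-(ν + 1)) (i + 1 + 1) = (-ν - 1) * (-ν) * poch (-ν + 1) i := by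
      rw [poch_sl, poch_sl]; ring_nf
    have e2 : poch (-ν) (i + 1 + 1) = (-ν) * poch (-ν + 1) i * (-ν + 1 + i) := by
      rw [poch_sl, poch_sr]; ring_nf
    have e3 : poch (-ν) (i + 1) = (-ν) * poch (-ν + 1) i := by
      rw [poch_sl]
    have e4 : poch (-(ν - 1)) (i + 1 + 1) = poch (-ν + 1) i * (-ν + 1 + i) * (-ν + 2 + i) := by
      rw [poch_sr, poch_sr]; push_cast; ring_nf
    have f1 : poch (ν + 1 + 2 * lam) (i + 1 + 1) =
        poch (ν + 2 * lam + 1) i * (ν + 2 * lam + 1 + i) * (ν + 2 * lam + 2 + i) := by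
      rw [poch_sr, poch_sr]; push_cast; ring_nf
    have f2 : poch (ν + 2 * lam) (i + 1 + 1) =
        (ν + 2 * lam) * poch (ν + 2 * lam + 1) i * (ν + 2 * lam + 1 + i) := by
      rw [poch_sl, poch_sr]; ring_nf
    have f3 : poch (ν + 2 * lam) (i + 1) = (ν + 2 * lam) * poch (ν + 2 * lam + 1) i := by
      rw [poch_sl]
    have f4 : poch (ν - 1 + 2 * lam) (i + 1 + 1) =
        (ν + 2 * lam - 1) * (ν + 2 * lam) * poch (ν + 2 * lam + 1) i := by
      rw [poch_sl, poch_sl]; ring_nf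
    simp only [gA, e1, e2, e3, e4, f1, f2, f3, f4]
    rw [poch_sr (lam + 1/2) (i + 1), Nat.factorial_succ (i + 1)]
    have hp := (poch_pos' (lam + 1/2) (by positivity) (i + 1)).ne'
    have hf : ((i + 1).factorial : ℝ) ≠ 0 := by positivity
    have hq : lam + 1/2 + ((i + 1 : ℕ) : ℝ) ≠ 0 := by positivity
    have hr : ((i + 1 : ℕ) : ℝ) + 1 ≠ 0 := by positivity
    push_cast at hq hr ⊢
    generalize poch (lam + 1/2) (i + 1) = P at *
    generalize ((i + 1).factorial : ℝ) = F at *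
    generalize poch (-ν + 1) i = Q
    generalize poch (ν + 2 * lam + 1) i = S
    generalize hx : (i : ℝ) = x at *
    rw [eq_sub_iff_add_eq]
    have hq' : 2 * lam + 1 + 2 * (x + 1) ≠ 0 := by
      intro h; apply hq; linarith
    field_simp
    ring

lemma gegen_eq (lam : ℝ) (n N : ℕ) (h : n + 1 ≤ N) (x : ℝ) :
    gegenbauerN lam n x = ∑ j ∈ Finset.range N, gA lam n j * ((1 - x) / 2) ^ j := by
  unfold gegenbauerN
  refine Finset.sum_subset (fun a ha => ?_) (fun a _ ha => ?_)
  · simp at *; omega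
  · have : n < a := by simp at ha; omega
    simp [poch_neg_zero n a this]

lemma gegen_rec (lam : ℝ) (hlam : 0 ≤ lam) (p : ℕ) (t : ℝ) :
    ((p : ℝ) + 1 + 2 * lam) * gegenbauerN lam (p + 2) t =
      2 * ((p : ℝ) + 1 + lam) * t * gegenbauerN lam (p + 1) t
        - ((p : ℝ) + 1) * gegenbauerN lam p t := by
  rw [gegen_eq lam (p + 2) (p + 2 + 1) le_rfl, gegen_eq lam p (p + 2 + 1) (by omega)]
  have h1 := gegen_eq lam (p + 1) (p + 2 + 1) (by omega) t
  have h2 := gegen_eq lam (p + 1) (p + 2) (by omega) t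
  have h3 : t * gegenbauerN lam (p + 1) t =
      (∑ j ∈ Finset.range (p + 2 + 1), gA lam (p + 1 : ℕ) j * ((1 - t) / 2) ^ j) -
      2 * ((1 - t) / 2) *
        ∑ j ∈ Finset.range (p + 2), gA lam (p + 1 : ℕ) j * ((1 - t) / 2) ^ j := by
    rw [← h1, ← h2]; ring
  rw [mul_assoc _ t, h3]
  generalize (1 - t) / 2 = y
  simp only [Finset.sum_range_succ' _ (p + 2), gA_zero, Finset.mul_sum, mul_add, mul_sub]
  have : ∀ j, ((p : ℝ) + 1 + 2 * lam) * (gA lam (p + 2 : ℕ) (j + 1) * y ^ (j + 1)) =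
      2 * ((p : ℝ) + 1 + lam) * (gA lam (p + 1 : ℕ) (j + 1) * y ^ (j + 1))
      - 2 * ((p : ℝ) + 1 + lam) * (2 * y * (gA lam (p + 1 : ℕ) j * y ^ j))
      - ((p : ℝ) + 1) * (gA lam p (j + 1) * y ^ (j + 1)) := by
    intro j
    have := gA_rec lam hlam ((p : ℝ) + 1) j
    have e : (p : ℝ) + 1 + 1 = p + 2 := by ring
    rw [add_sub_cancel_right, e] at this
    push_cast
    rw [← mul_assoc, this, pow_succ]; ring
  have h4 := Finset.sum_congr (rfl : Finset.range (p + 2) = _) (fun j _ => this j)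
  simp only [Finset.sum_sub_distrib, mul_add, mul_sub, pow_zero] at h4 ⊢
  rw [h4]; ring

lemma gegen_zero (lam t : ℝ) : gegenbauerN lam 0 t = 1 := by
  simp [gegenbauerN, poch_zero']

lemma gegen_one (lam : ℝ) (hlam : 0 ≤ lam) (t : ℝ) : gegenbauerN lam 1 t = t := by
  have h2 : lam * 2 + 1 ≠ 0 := by positivity
  have h3 : lam + 1/2 ≠ 0 := by positivity
  simp [gegenbauerN, Finset.sum_range_succ, poch_zero', poch_sr]
  field_simp
  ring

lemma gegen_bound (lam : ℝ) (hlam : 0 ≤ lam) (t : ℝ) (ht : |t| ≤ 1) (n : ℕ) :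
    |gegenbauerN lam n t| ≤ 3 ^ n := by
  induction n using Nat.strong_induction_on with
  | _ n ih =>
    rcases n with _ | _ | p
    · simp [gegen_zero]
    · rw [zero_add, gegen_one lam hlam]; linarith
    · have h0 := ih p (by omega)
      have h1 := ih (p + 1) (by omega)
      have hr := gegen_rec lam hlam p t
      have hpos : 0 < (p : ℝ) + 1 + 2 * lam := by positivity
      have hab : ((p : ℝ) + 1 + 2 * lam) * |gegenbauerN lam (p + 2) t| ≤
          2 * ((p : ℝ) + 1 + lam) * |gegenbauerN lam (p + 1) t|
          + ((p : ℝ) + 1) * |gegenbauerN lam p t| := by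
        have e : ((p : ℝ) + 1 + 2 * lam) * |gegenbauerN lam (p + 2) t| =
            |((p : ℝ) + 1 + 2 * lam) * gegenbauerN lam (p + 2) t| := by
          rw [abs_mul, abs_of_pos hpos]
        rw [e, hr]
        refine (abs_sub _ _).trans ?_
        rw [abs_mul _ (gegenbauerN lam (p + 1) t), abs_mul _ t, abs_mul _ (gegenbauerN lam p t),
          abs_of_nonneg (by positivity : 0 ≤ 2 * ((p : ℝ) + 1 + lam)),
          abs_of_nonneg (by positivity : 0 ≤ (p : ℝ) + 1)]
        have : |t| * |gegenbauerN lam (p + 1) t| ≤ 1 * |gegenbauerN lam (p + 1) t| := by gcongr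
        have := mul_le_mul_of_nonneg_left this (by positivity : 0 ≤ 2 * ((p : ℝ) + 1 + lam))
        linarith
      have h3 : (0 : ℝ) < 3 ^ p := by positivity
      have e1 : (3 : ℝ) ^ (p + 1) = 3 * 3 ^ p := by ring
      have e2 : (3 : ℝ) ^ (p + 1 + 1) = 9 * 3 ^ p := by ring
      rw [e1] at h1
      rw [e2]
      refine le_of_mul_le_mul_left (hab.trans ?_) hpos
      have k1 := mul_le_mul_of_nonneg_left h1 (by positivity : 0 ≤ 2 * ((p : ℝ) + 1 + lam))
      have k2 := mul_le_mul_of_nonneg_left h0 (by positivity : 0 ≤ (p : ℝ) + 1)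
      have k3 : 0 ≤ lam * 3 ^ p := by positivity
      have k4 : 0 ≤ (p : ℝ) * 3 ^ p := by positivity
      nlinarith

noncomputable def gRho (lam : ℝ) (n : ℕ) : ℝ := if n = 0 then 2 else (2 * lam + n) / (lam + n)

lemma gRho_nonneg (lam : ℝ) (hlam : 0 ≤ lam) (n : ℕ) : 0 ≤ gRho lam n := by
  unfold gRho; split_ifs <;> positivity

lemma gRho_le (lam : ℝ) (hlam : 0 ≤ lam) (n : ℕ) : gRho lam n ≤ 2 := by
  unfold gRho; split_ifs with h
  · exact le_rfl
  · have : 0 < (n : ℝ) := by positivity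
    rw [div_le_iff₀ (by positivity)]; linarith

lemma gegenCoeff_zero (lam : ℝ) : gegenCoeff lam 0 = 1 := by
  simp [gegenCoeff, poch_zero']

lemma gegenCoeff_succ (lam : ℝ) (hlam : 0 ≤ lam) (n : ℕ) :
    gegenCoeff lam (n + 1) = gRho lam n * gegenCoeff lam n := by
  unfold gegenCoeff gRho
  by_cases h1 : lam = 0
  · subst h1
    by_cases h4 : n = 0
    · simp [h4]
    · have : (n : ℝ) ≠ 0 := by exact_mod_cast h4
      simp [h4, this]
  · have hl : 0 < lam := lt_of_le_of_ne hlam (Ne.symm h1)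
    by_cases h5 : n = 0
    · subst h5
      simp [h1, poch_sr, poch_zero']
    · have := (poch_pos' lam hl n).ne'
      simp only [h1, h5, if_false]
      rw [poch_sr, poch_sr]
      field_simp

lemma gegenCoeff_nonneg (lam : ℝ) (hlam : 0 ≤ lam) (n : ℕ) : 0 ≤ gegenCoeff lam n := by
  induction n with
  | zero => simp [gegenCoeff_zero]
  | succ n ih => rw [gegenCoeff_succ lam hlam]; exact mul_nonneg (gRho_nonneg lam hlam n) ih

lemma gegenCoeff_le (lam : ℝ) (hlam : 0 ≤ lam) (n : ℕ) : gegenCoeff lam n ≤ 2 ^ n := by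
  induction n with
  | zero => simp [gegenCoeff_zero]
  | succ n ih =>
    rw [gegenCoeff_succ lam hlam, pow_succ']
    exact mul_le_mul (gRho_le lam hlam n) ih (gegenCoeff_nonneg lam hlam n) (by norm_num)

lemma gegen_mul_zero (lam : ℝ) (hlam : 0 ≤ lam) (t : ℝ) :
    2 * t * gegenbauerN lam 0 t = gRho lam 0 * gegenbauerN lam 1 t := by
  rw [gegen_zero, gegen_one lam hlam]; simp [gRho]

lemma gegen_mul_succ (lam : ℝ) (hlam : 0 ≤ lam) (t : ℝ) (n : ℕ) :
    2 * t * gegenbauerN lam (n + 1) t = gRho lam (n + 1) * gegenbauerN lam (n + 2) t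
      + ((n : ℝ) + 1) / (n + 1 + lam) * gegenbauerN lam n t := by
  have h := gegen_rec lam hlam n t
  have hp : (n : ℝ) + 1 + lam ≠ 0 := by positivity
  have hp' : lam + ((n : ℝ) + 1) ≠ 0 := by positivity
  simp [gRho]
  field_simp
  linear_combination (-((n : ℝ) + 1 + lam)) * h

noncomputable def gD (lam : ℝ) (n k : ℕ) : ℝ :=
  gegenCoeff lam n / (n.factorial * (k.factorial * poch (n + lam + 1) k))

lemma gD_rec_zero (lam : ℝ) (hlam : 0 ≤ lam) (k : ℕ) :
    (2 * (k + 1) : ℝ) * gD lam 0 (k + 1) = 1 / (1 + lam) * gD lam 1 k := by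
  have h1 : 1 + lam ≠ 0 := by positivity
  have hp := (poch_pos' (1 + lam + 1) (by positivity) k).ne'
  have e : poch (0 + lam + 1) (k + 1) = (1 + lam) * poch (1 + lam + 1) k := by
    rw [poch_sl]; ring_nf
  simp only [gD, Nat.cast_zero, Nat.cast_one, e, Nat.factorial_succ, gegenCoeff_zero]
  rw [show gegenCoeff lam 1 = 2 by
    have := gegenCoeff_succ lam hlam 0
    simpa [gegenCoeff_zero, gRho] using this]
  push_cast
  have : (k.factorial : ℝ) ≠ 0 := by positivity
  simp
  field_simp

lemma gD_rec_left (lam : ℝ) (hlam : 0 ≤ lam) (n : ℕ) :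
    ((n : ℝ) + 1) * gD lam (n + 1) 0 = gRho lam n * gD lam n 0 := by
  simp only [gD, poch_zero', Nat.factorial_succ, gegenCoeff_succ lam hlam n]
  have : (n.factorial : ℝ) ≠ 0 := by positivity
  push_cast
  simp
  field_simp

lemma gD_rec (lam : ℝ) (hlam : 0 ≤ lam) (n k : ℕ) :
    ((n : ℝ) + 1 + 2 * (k + 1)) * gD lam (n + 1) (k + 1) =
      gRho lam n * gD lam n (k + 1) + ((n : ℝ) + 2) / (n + 2 + lam) * gD lam (n + 2) k := by
  have h1 : (n : ℝ) + 1 + lam ≠ 0 := by positivity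
  have h2 : (n : ℝ) + 2 + lam ≠ 0 := by positivity
  have h3 : (n : ℝ) + lam + 2 + k ≠ 0 := by positivity
  have hp := (poch_pos' ((n : ℝ) + lam + 3) (by positivity) k).ne'
  have hp2 := (poch_pos' ((n : ℝ) + lam + 2) (by positivity) k).ne'
  have e0 : poch ((n : ℝ) + lam + 2) k * ((n : ℝ) + lam + 2 + k)
      = ((n : ℝ) + lam + 2) * poch ((n : ℝ) + lam + 3) k := by
    rw [← poch_sr, poch_sl]; ring_nf
  have e0' : poch ((n : ℝ) + lam + 2) k
      = ((n : ℝ) + 2 + lam) * poch ((n : ℝ) + lam + 3) k / ((n : ℝ) + lam + 2 + k) := by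
    rw [eq_div_iff h3, e0]; ring
  have e1 : poch (((n + 1 : ℕ) : ℝ) + lam + 1) (k + 1)
      = ((n : ℝ) + 2 + lam) * poch ((n : ℝ) + lam + 3) k := by
    rw [poch_sl]; push_cast; ring_nf
  have e2 : poch ((n : ℝ) + lam + 1) (k + 1)
      = ((n : ℝ) + 1 + lam) * (((n : ℝ) + 2 + lam) * poch ((n : ℝ) + lam + 3) k
        / ((n : ℝ) + lam + 2 + k)) := by
    rw [poch_sl, ← e0']; ring_nf
  have e3 : poch (((n + 2 : ℕ) : ℝ) + lam + 1) k = poch ((n : ℝ) + lam + 3) k := by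
    push_cast; ring_nf
  have e4 : gRho lam (n + 1) = (2 * lam + (n + 1)) / (n + 1 + lam) := by
    simp [gRho]; ring_nf
  simp only [gD, e1, e2, e3, Nat.factorial_succ, gegenCoeff_succ lam hlam (n + 1),
    gegenCoeff_succ lam hlam n, e4]
  have : (n.factorial : ℝ) ≠ 0 := by positivity
  have : (k.factorial : ℝ) ≠ 0 := by positivity
  have : (n : ℝ) + 1 + 1 ≠ 0 := by positivity
  push_cast
  generalize gegenCoeff lam n = c
  generalize gRho lam n = ρ
  field_simp
  ring

noncomputable def gQ (lam : ℝ) (m n : ℕ) : ℝ :=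
  if n ≤ m ∧ Even (m - n) then gD lam n ((m - n) / 2) else 0

lemma gQ_even (lam : ℝ) (m n k : ℕ) (h : m = n + 2 * k) : gQ lam m n = gD lam n k := by
  subst h; simp [gQ]

lemma gQ_odd (lam : ℝ) (m n k : ℕ) (h : m = n + 2 * k + 1) : gQ lam m n = 0 := by
  subst h
  have : n + 2 * k + 1 - n = 2 * k + 1 := by omega
  simp [gQ, this]

lemma gQ_lt (lam : ℝ) (m n : ℕ) (h : m < n) : gQ lam m n = 0 := by
  simp [gQ, Nat.not_le.mpr h]

lemma gQ_rec_succ (lam : ℝ) (hlam : 0 ≤ lam) (m n : ℕ) :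
    ((m : ℝ) + 1) * gQ lam (m + 1) (n + 1) =
      gRho lam n * gQ lam m n + ((n : ℝ) + 2) / (n + 2 + lam) * gQ lam m (n + 2) := by
  rcases lt_or_ge m n with h | h
  · rw [gQ_lt _ _ _ (by omega), gQ_lt _ _ _ h, gQ_lt _ _ _ (by omega)]; simp
  · obtain ⟨d, rfl⟩ := Nat.exists_eq_add_of_le h
    rcases Nat.even_or_odd' d with ⟨k, rfl | rfl⟩
    · rw [gQ_even lam _ (n + 1) k (by omega), gQ_even lam _ n k (by omega)]
      rcases k with _ | k
      · rw [gQ_lt _ _ (n + 2) (by omega)]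
        have := gD_rec_left lam hlam n
        simp; linarith
      · rw [gQ_even lam _ (n + 2) k (by omega), ← gD_rec lam hlam]
        push_cast; ring
    · rw [gQ_odd lam _ (n + 1) k (by omega), gQ_odd lam _ n k (by omega)]
      rcases k with _ | k
      · rw [gQ_lt _ _ (n + 2) (by omega)]; simp
      · rw [gQ_odd lam _ (n + 2) k (by omega)]; simp

lemma gQ_rec_zero (lam : ℝ) (hlam : 0 ≤ lam) (m : ℕ) :
    ((m : ℝ) + 1) * gQ lam (m + 1) 0 = 1 / (1 + lam) * gQ lam m 1 := by
  rcases Nat.even_or_odd' m with ⟨k, rfl | rfl⟩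
  · rw [gQ_odd lam _ 0 k (by omega)]
    rcases k with _ | k
    · rw [gQ_lt _ _ 1 (by omega)]; simp
    · rw [gQ_odd lam _ 1 k (by omega)]; simp
  · rw [gQ_even lam _ 0 (k + 1) (by omega), gQ_even lam _ 1 k (by omega), ← gD_rec_zero lam hlam]
    push_cast; ring

lemma gQ_sum (lam : ℝ) (hlam : 0 ≤ lam) (t : ℝ) (m : ℕ) :
    ∑ n ∈ Finset.range (m + 1), gQ lam m n * gegenbauerN lam n t = (2 * t) ^ m / m.factorial := by
  induction m with
  | zero =>
    simp [gegen_zero, gQ, gD, gegenCoeff_zero, poch_zero']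
  | succ m ih =>
    have key : ((m : ℝ) + 1) *
        ∑ n ∈ Finset.range (m + 1 + 1), gQ lam (m + 1) n * gegenbauerN lam n t =
        2 * t * ∑ n ∈ Finset.range (m + 1), gQ lam m n * gegenbauerN lam n t := by
      let h : ℕ → ℝ := fun n => ((n : ℝ) + 1) / (n + 1 + lam) * gQ lam m (n + 1) *
        gegenbauerN lam n t
      let u : ℕ → ℝ := fun n => gRho lam n * gQ lam m n * gegenbauerN lam (n + 1) t
      have hh : ∑ n ∈ Finset.range (m + 1), h (n + 1) + h 0 = ∑ n ∈ Finset.range m, h n := by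
        rw [← Finset.sum_range_succ' h (m + 1), Finset.sum_range_succ, Finset.sum_range_succ]
        simp only [h]
        rw [gQ_lt lam m (m + 1) (by omega), gQ_lt lam m (m + 1 + 1) (by omega)]; simp
      have hl : ((m : ℝ) + 1) *
          ∑ n ∈ Finset.range (m + 1 + 1), gQ lam (m + 1) n * gegenbauerN lam n t =
          ∑ n ∈ Finset.range (m + 1), u n + (∑ n ∈ Finset.range (m + 1), h (n + 1) + h 0) := by
        rw [Finset.sum_range_succ', mul_add, Finset.mul_sum, ← mul_assoc, gQ_rec_zero lam hlam,
          ← add_assoc, ← Finset.sum_add_distrib]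
        congr 1
        · refine Finset.sum_congr rfl fun n _ => ?_
          rw [← mul_assoc, gQ_rec_succ lam hlam]
          simp only [h, u]; push_cast; ring
        · simp [h]
      have hr : 2 * t * ∑ n ∈ Finset.range (m + 1), gQ lam m n * gegenbauerN lam n t =
          ∑ n ∈ Finset.range (m + 1), u n + ∑ n ∈ Finset.range m, h n := by
        rw [Finset.sum_range_succ', Finset.sum_range_succ' u, mul_add, Finset.mul_sum,
          add_right_comm, ← Finset.sum_add_distrib]
        congr 1
        · refine Finset.sum_congr rfl fun n _ => ?_
          have := gegen_mul_succ lam hlam t n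
          simp only [h, u]
          linear_combination gQ lam m (n + 1) * this
        · have := gegen_mul_zero lam hlam t
          simp only [u, zero_add]
          linear_combination gQ lam m 0 * this
      rw [hl, hh, hr]
    rw [ih] at key
    have h1 : (m : ℝ) + 1 ≠ 0 := by positivity
    have h2 : (m.factorial : ℝ) ≠ 0 := by positivity
    rw [Nat.factorial_succ]
    push_cast
    field_simp
    field_simp at key
    rw [mul_comm, ← mul_assoc] at *
    rw [pow_succ]
    linear_combination key

lemma poch_ge_one (a : ℝ) (ha : 1 ≤ a) (n : ℕ) : 1 ≤ poch a n := by
  induction n with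
  | zero => simp [poch_zero']
  | succ n ih =>
    rw [poch_sr]
    have : (0 : ℝ) ≤ n := by positivity
    exact one_le_mul_of_one_le_of_one_le ih (by linarith)

lemma gamma_poch (a : ℝ) (ha : 0 < a) (n : ℕ) :
    Real.Gamma (n + a) = poch a n * Real.Gamma a := by
  induction n with
  | zero => simp [poch_zero']
  | succ n ih =>
    have : ((n + 1 : ℕ) : ℝ) + a = (n + a) + 1 := by push_cast; ring
    rw [this, Real.Gamma_add_one (by positivity), ih, poch_sr]; ring

lemma bessel_term_bound (α : ℝ) (hα : 0 ≤ α) (x : ℝ) (k : ℕ) :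
    ‖(-1 : ℝ) ^ k * (x / 2) ^ (2 * k) / (k.factorial * poch (α + 1) k)‖
      ≤ (x ^ 2 / 4) ^ k / k.factorial := by
  have h1 := poch_ge_one (α + 1) (by linarith) k
  have h2 : (0 : ℝ) < k.factorial := by positivity
  have e : (x / 2) ^ (2 * k) = (x ^ 2 / 4) ^ k := by rw [pow_mul]; congr 1; ring
  have h0 : 0 ≤ (x ^ 2 / 4) ^ k := by positivity
  rw [e, norm_div, norm_mul, norm_pow, norm_neg, norm_one, one_pow, one_mul,
    Real.norm_of_nonneg h0, Real.norm_of_nonneg (by positivity)]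
  gcongr
  nlinarith

lemma hasSum_real_exp (y : ℝ) : HasSum (fun k : ℕ => y ^ k / k.factorial) (Real.exp y) := by
  rw [Real.exp_eq_exp_ℝ]
  exact NormedSpace.expSeries_div_hasSum_exp y

lemma bessel_hasSum (α : ℝ) (hα : 0 ≤ α) (x : ℝ) :
    HasSum (fun k : ℕ => (-1 : ℝ) ^ k * (x / 2) ^ (2 * k) / (k.factorial * poch (α + 1) k))
      (besselJR α x) := by
  have hs : Summable (fun k : ℕ =>
      (-1 : ℝ) ^ k * (x / 2) ^ (2 * k) / (k.factorial * poch (α + 1) k)) :=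
    Summable.of_norm_bounded (hasSum_real_exp (x ^ 2 / 4)).summable (bessel_term_bound α hα x)
  convert hs.hasSum using 1
  unfold besselJR
  rw [← tsum_mul_left]
  congr 1
  ext k
  have hG := (Real.Gamma_pos_of_pos (by linarith : 0 < α + 1)).ne'
  rw [add_assoc, gamma_poch (α + 1) (by linarith)]
  have := (poch_pos' (α + 1) (by linarith) k).ne'
  field_simp

lemma bessel_bound (α : ℝ) (hα : 0 ≤ α) (x : ℝ) : |besselJR α x| ≤ Real.exp (x ^ 2 / 4) := by
  rw [← (bessel_hasSum α hα x).tsum_eq, ← Real.norm_eq_abs]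
  exact tsum_of_norm_bounded (hasSum_real_exp (x ^ 2 / 4)) (bessel_term_bound α hα x)

noncomputable def gF (lam r t : ℝ) (p : ℕ × ℕ) : ℂ :=
  (Complex.I * (r : ℂ) / 2) ^ (p.1 + 2 * p.2) *
    ((gD lam p.1 p.2 * gegenbauerN lam p.1 t : ℝ) : ℂ)

noncomputable def gG (lam r t : ℝ) (p : ℕ × ℕ) : ℂ :=
  (Complex.I * (r : ℂ) / 2) ^ p.1 *
    ((gQ lam p.1 p.2 * gegenbauerN lam p.2 t : ℝ) : ℂ)

lemma norm_base (r : ℝ) : ‖Complex.I * (r : ℂ) / 2‖ = |r| / 2 := by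
  simp

lemma gF_bound (lam : ℝ) (hlam : 0 ≤ lam) (r t : ℝ) (ht : |t| ≤ 1) (p : ℕ × ℕ) :
    ‖gF lam r t p‖ ≤
      (3 * |r|) ^ p.1 / p.1.factorial * ((r ^ 2 / 4) ^ p.2 / p.2.factorial) := by
  obtain ⟨n, k⟩ := p
  simp only [gF]
  have hp := poch_ge_one ((n : ℝ) + lam + 1) (by linarith [(by positivity : (0 : ℝ) ≤ n)]) k
  have hg := gegen_bound lam hlam t ht n
  have hc := gegenCoeff_le lam hlam n
  have hc0 := gegenCoeff_nonneg lam hlam n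
  have hkf : (0 : ℝ) < k.factorial := by positivity
  have hD : |gD lam n k| ≤ 2 ^ n / (n.factorial * k.factorial) := by
    unfold gD
    rw [abs_of_nonneg (by positivity)]
    gcongr
    nlinarith
  rw [norm_mul, norm_pow, norm_base, Complex.norm_real, Real.norm_eq_abs, abs_mul]
  calc (|r| / 2) ^ (n + 2 * k) * (|gD lam n k| * |gegenbauerN lam n t|)
      ≤ (|r| / 2) ^ (n + 2 * k) * (2 ^ n / (n.factorial * k.factorial) * 3 ^ n) := by gcongr
    _ = (3 * |r|) ^ n / n.factorial * ((r ^ 2 / 4) ^ k / k.factorial) := by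
      rw [pow_add, pow_mul, div_pow, div_pow, sq_abs, mul_pow]
      field_simp
      norm_num

lemma gF_summable (lam : ℝ) (hlam : 0 ≤ lam) (r t : ℝ) (ht : |t| ≤ 1) :
    Summable (gF lam r t) := by
  refine Summable.of_norm_bounded ?_ (gF_bound lam hlam r t ht)
  exact (hasSum_real_exp (3 * |r|)).summable.mul_of_nonneg (hasSum_real_exp (r ^ 2 / 4)).summable
    (fun n => by positivity) (fun n => by positivity)

lemma gF_tsum (lam : ℝ) (hlam : 0 ≤ lam) (r t : ℝ) (ht : |t| ≤ 1) :
    HasSum (gF lam r t) (Complex.exp (Complex.I * r * t)) := by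
  have hs := (gF_summable lam hlam r t ht).hasSum
  let i : ℕ × ℕ → ℕ × ℕ := fun p => (p.1 + 2 * p.2, p.1)
  have hi : Function.Injective i := by
    rintro ⟨a, b⟩ ⟨c, d⟩ h
    simp only [i, Prod.mk.injEq] at h ⊢
    omega
  have hcomp : gG lam r t ∘ i = gF lam r t := by
    ext p
    simp only [Function.comp, gG, gF, i]
    rw [gQ_even lam _ p.1 p.2 rfl]
  have hz : ∀ x, x ∉ Set.range i → gG lam r t x = 0 := by
    rintro ⟨m, n⟩ hx
    have : gQ lam m n = 0 := by
      rcases lt_or_ge m n with h | h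
      · exact gQ_lt _ _ _ h
      · obtain ⟨d, rfl⟩ := Nat.exists_eq_add_of_le h
        rcases Nat.even_or_odd' d with ⟨k, rfl | rfl⟩
        · exact absurd ⟨(n, k), rfl⟩ hx
        · exact gQ_odd _ _ _ k (by omega)
    simp [gG, this]
  rw [← hcomp] at hs
  have hs2 := (hi.hasSum_iff hz).mp hs
  rw [hcomp] at hs2
  have hfib : ∀ m, HasSum (fun n => gG lam r t (m, n))
      ((Complex.I * r * t) ^ m / m.factorial) := by
    intro m
    have h := hasSum_sum_of_ne_finset_zero (L := .unconditional ℕ) (f := fun n => gG lam r t (m, n))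
      (s := Finset.range (m + 1)) (fun n hn => by
        have : gQ lam m n = 0 := gQ_lt _ _ _ (by simp at hn; omega)
        simp [gG, this])
    convert h using 1
    simp only [gG]
    rw [← Finset.mul_sum, ← Complex.ofReal_sum, gQ_sum lam hlam]
    push_cast
    rw [← mul_div_assoc, ← mul_pow]
    congr 2
    ring
  have h3 := hs2.prod_fiberwise hfib
  have h4 : HasSum (fun m : ℕ => (Complex.I * r * t) ^ m / (m.factorial : ℂ))
      (Complex.exp (Complex.I * r * t)) := by
    rw [Complex.exp_eq_exp_ℂ]
    exact NormedSpace.expSeries_div_hasSum_exp _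
  rw [← h3.unique h4]
  exact (gF_summable lam hlam r t ht).hasSum

lemma gegen_hasSum (lam : ℝ) (hlam : 0 ≤ lam) (r t : ℝ) (ht : |t| ≤ 1) :
    HasSum
        (fun n : ℕ =>
          (Complex.I * (r : ℂ) / 2) ^ n * ((gegenCoeff lam n / n.factorial : ℝ) : ℂ) *
            ((besselJR ((n : ℝ) + lam) r : ℝ) : ℂ) * ((gegenbauerN lam n t : ℝ) : ℂ))
        (Complex.exp (Complex.I * (r : ℂ) * (t : ℂ))) := by
  refine (gF_tsum lam hlam r t ht).prod_fiberwise fun n => ?_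
  have h := bessel_hasSum ((n : ℝ) + lam) (by positivity) r
  have h2 := (Complex.hasSum_ofReal.mpr h).mul_left
    ((Complex.I * (r : ℂ) / 2) ^ n * ((gegenCoeff lam n / n.factorial : ℝ) : ℂ))
  have h3 := h2.mul_right ((gegenbauerN lam n t : ℝ) : ℂ)
  refine (congrArg (fun f => HasSum f _) (funext fun k => ?_)).mpr h3
  simp only [gF, gD]
  have e : (Complex.I * (r : ℂ) / 2) ^ (n + 2 * k) =
      (Complex.I * (r : ℂ) / 2) ^ n * ((-1) ^ k * ((r : ℂ) / 2) ^ (2 * k)) := by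
    rw [pow_add, pow_mul, pow_mul, ← mul_pow]
    congr 2
    rw [mul_div_assoc, mul_pow, Complex.I_sq]
  rw [e]
  push_cast
  field_simp

lemma gegen_term_bound (lam : ℝ) (hlam : 0 ≤ lam) (r t R : ℝ) (hr : |r| ≤ R) (ht : |t| ≤ 1)
    (n : ℕ) :
    ‖(Complex.I * (r : ℂ) / 2) ^ n * ((gegenCoeff lam n / n.factorial : ℝ) : ℂ) *
            ((besselJR ((n : ℝ) + lam) r : ℝ) : ℂ) * ((gegenbauerN lam n t : ℝ) : ℂ)‖ ≤
      (3 * R) ^ n / n.factorial * Real.exp (R ^ 2 / 4) := by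
  have hR : 0 ≤ R := (abs_nonneg r).trans hr
  have hg := gegen_bound lam hlam t ht n
  have hc := gegenCoeff_le lam hlam n
  have hc0 := gegenCoeff_nonneg lam hlam n
  have hb := bessel_bound ((n : ℝ) + lam) (by positivity) r
  have hb2 : Real.exp (r ^ 2 / 4) ≤ Real.exp (R ^ 2 / 4) := by
    apply Real.exp_le_exp.mpr
    rw [← sq_abs r]
    gcongr
  rw [norm_mul, norm_mul, norm_mul, norm_pow, norm_base, Complex.norm_real, Complex.norm_real,
    Complex.norm_real, Real.norm_eq_abs, Real.norm_eq_abs, Real.norm_eq_abs,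
    abs_of_nonneg (by positivity : 0 ≤ gegenCoeff lam n / n.factorial)]
  calc _ ≤ (R / 2) ^ n * (2 ^ n / n.factorial) * Real.exp (R ^ 2 / 4) * 3 ^ n := by
        gcongr
        exact hb.trans hb2
    _ = _ := by
        rw [div_pow, mul_pow]; field_simp

/-- Gegenbauer's degenerate addition theorem: for `λ ≥ 0`,
`e^{irt} = Σ_{n≥0} (ir/2)^n ((2λ)_n/((λ)_n n!)) j_{n+λ}(r) C̃_n^λ(t)` for all `r ∈ ℝ`,
`t ∈ [−1,1]`, with locally uniform convergence in `(r,t)`. -/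
theorem gegenbauer_degenerate_addition (lam : ℝ) (hlam : 0 ≤ lam) :
    (∀ (r t : ℝ), t ∈ Set.Icc (-1 : ℝ) 1 →
      HasSum
        (fun n : ℕ =>
          (Complex.I * (r : ℂ) / 2) ^ n * ((gegenCoeff lam n / n.factorial : ℝ) : ℂ) *
            ((besselJR ((n : ℝ) + lam) r : ℝ) : ℂ) * ((gegenbauerN lam n t : ℝ) : ℂ))
        (Complex.exp (Complex.I * (r : ℂ) * (t : ℂ))))
    ∧ (∀ K : Set (ℝ × ℝ), IsCompact K → K ⊆ Set.univ ×ˢ Set.Icc (-1 : ℝ) 1 →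
      TendstoUniformlyOn
        (fun (m : ℕ) (p : ℝ × ℝ) =>
          ∑ n ∈ Finset.range m,
            (Complex.I * (p.1 : ℂ) / 2) ^ n * ((gegenCoeff lam n / n.factorial : ℝ) : ℂ) *
              ((besselJR ((n : ℝ) + lam) p.1 : ℝ) : ℂ) *
              ((gegenbauerN lam n p.2 : ℝ) : ℂ))
        (fun p => Complex.exp (Complex.I * (p.1 : ℂ) * (p.2 : ℂ))) atTop K) := by
  constructor
  · intro r t ht
    exact gegen_hasSum lam hlam r t (abs_le.mpr ht)
  · intro K hK hsub
    obtain ⟨R, hR⟩ := hK.isBounded.exists_norm_le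
    have hu : Summable (fun n : ℕ => (3 * R) ^ n / n.factorial * Real.exp (R ^ 2 / 4)) :=
      (hasSum_real_exp (3 * R)).summable.mul_right _
    have h := tendstoUniformlyOn_tsum_nat hu (s := K)
      (f := fun (n : ℕ) (p : ℝ × ℝ) =>
            (Complex.I * (p.1 : ℂ) / 2) ^ n * ((gegenCoeff lam n / n.factorial : ℝ) : ℂ) *
              ((besselJR ((n : ℝ) + lam) p.1 : ℝ) : ℂ) *
              ((gegenbauerN lam n p.2 : ℝ) : ℂ))
      (fun n p hp => gegen_term_bound lam hlam p.1 p.2 R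
        ((norm_fst_le p).trans (hR p hp)) (abs_le.mpr (hsub hp).2) n)
    refine h.congr_right fun p hp => ?_
    exact (gegen_hasSum lam hlam p.1 p.2 (abs_le.mpr (hsub hp).2)).tsum_eq
end
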